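/- arXiv:1810.07126 — 2 statements merged into one kernel-verified Lean document; each statement's English description precedes it below -/
import Mathlib

section
/- Let g1, g2 : [0,1] → ℝ be continuous functions and define κ_{g1,g2}(X1,X2) = ρ(g1(F1(X1)), g2(F2(X2))) for random variables X1 ~ F1, X2 ~ F2 with continuous distribution functions, where ρ denotes Pearson's correlation coefficient. If κ_{g1,g2} is a measure of concordance in the sense of Scarsini, then g1 and g2 are both increasing or both decreasing, i.e., (g1(u') − g1(u))(g2(v') − g2(v)) ≥ 0 for all 0 ≤ u < u' ≤ 1 and 0 ≤ v < v' ≤ 1. -/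
open MeasureTheory ProbabilityTheory Set

noncomputable section

/-- The uniform distribution on (0,1). -/
def unif01 : Measure ℝ := volume.restrict (Set.Ioo (0:ℝ) 1)

/-- Pearson's correlation coefficient of two real random variables. -/
def pearson {Ω : Type*} [MeasurableSpace Ω] (μ : Measure Ω) (Y1 Y2 : Ω → ℝ) : ℝ :=
  ((∫ ω, Y1 ω * Y2 ω ∂μ) - (∫ ω, Y1 ω ∂μ) * (∫ ω, Y2 ω ∂μ)) /
    Real.sqrt (variance Y1 μ * variance Y2 μ)

/-- The distribution function (CDF) of a measure on ℝ. -/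
def cdfOf (ν : Measure ℝ) : ℝ → ℝ := fun x => (ν (Set.Iic x)).toReal

/-- The quantile function (generalized inverse) of a distribution function. -/
def quantileFn (G : ℝ → ℝ) (p : ℝ) : ℝ := sInf {x : ℝ | p ≤ G x}

/-- The joint distribution function of a measure on ℝ². -/
def cdf2 (μ : Measure (ℝ × ℝ)) (u v : ℝ) : ℝ := (μ (Set.Iic u ×ˢ Set.Iic v)).toReal

/-- A (bivariate) copula: the joint law of a random vector with uniform (0,1) margins. -/
structure IsCopula (μ : Measure (ℝ × ℝ)) : Prop where
  prob : IsProbabilityMeasure μ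
  fst_marginal : μ.map Prod.fst = unif01
  snd_marginal : μ.map Prod.snd = unif01

/-- The comonotone copula M. -/
def comonCopula : Measure (ℝ × ℝ) := unif01.map (fun u => (u, u))

/-- The countermonotone copula W. -/
def counterCopula : Measure (ℝ × ℝ) := unif01.map (fun u => (u, 1 - u))

/-- The independence copula Π. -/
def indepCopula : Measure (ℝ × ℝ) := unif01.prod unif01

/-- A measure of concordance in the sense of Scarsini, as a functional on copulas. -/
structure IsConcordanceMeasure (κ : Measure (ℝ × ℝ) → ℝ) : Prop where
  symmetry : ∀ μ, IsCopula μ → κ (μ.map Prod.swap) = κ μ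
  coherence : ∀ μ ν, IsCopula μ → IsCopula ν →
    (∀ u v, cdf2 μ u v ≤ cdf2 ν u v) → κ μ ≤ κ ν
  range : ∀ μ, IsCopula μ → κ μ ∈ Set.Icc (-1 : ℝ) 1
  comonotone_val : κ comonCopula = 1
  countermonotone_val : κ counterCopula = -1
  independence : κ indepCopula = 0
  change_sign : ∀ μ, IsCopula μ → κ (μ.map (fun p => (p.1, 1 - p.2))) = - κ μ
  continuity : ∀ (Cs : ℕ → Measure (ℝ × ℝ)) (C : Measure (ℝ × ℝ)),
    (∀ n, IsCopula (Cs n)) → IsCopula C →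
    (∀ u v, Filter.Tendsto (fun n => cdf2 (Cs n) u v) Filter.atTop (nhds (cdf2 C u v))) →
    Filter.Tendsto (fun n => κ (Cs n)) Filter.atTop (nhds (κ C))

/-!
Fix `u < u'` and `v < v'`. Moving a mass `ε` from just below `u'` to just above `u` is encoded by
`a = 1_{(u, u + ε)} - 1_{(u' - ε, u')}`, and `b` does the same for `v` and `v'`. The density
`1 + a(x) b(y)` defines a copula, since `a` and `b` have mean zero; this copula dominates the
independence copula in the concordance order, since `a` and `b` have nonnegative primitives. Hence
the covariance of `g1(U1)` and `g2(U2)` under it, which is `(∫ a g1) (∫ b g2)`, is nonnegative.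
Dividing by `ε ^ 2` and letting `ε` tend to `0` gives `0 ≤ (g1 u - g1 u') (g2 v - g2 v')`.
-/

open Filter Topology

/-! ### Sarmanov perturbations of product measures -/

section Sarmanov

variable {α β : Type*} [MeasurableSpace α] [MeasurableSpace β] {μ : Measure α} {ν : Measure β}
  {a : α → ℝ} {b : β → ℝ}

/-- Sarmanov's perturbation of the product measure `μ.prod ν`: the measure with density
`1 + a x * b y`. It keeps the margins when `a` and `b` are bounded by `1` and have mean zero. Where
the density would be negative it is truncated to `0`. -/
def sarmanov (μ : Measure α) (ν : Measure β) (a : α → ℝ) (b : β → ℝ) : Measure (α × β) :=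
  (μ.prod ν).withDensity fun p => ENNReal.ofReal (1 + a p.1 * b p.2)

theorem one_add_mul_nonneg_of_abs_le_one {x y : ℝ} (hx : |x| ≤ 1) (hy : |y| ≤ 1) :
    0 ≤ 1 + x * y := by
  have hxy : |x * y| ≤ 1 := abs_mul x y ▸ mul_le_one₀ hx (abs_nonneg y) hy
  linarith [neg_le_of_abs_le hxy]

theorem integrable_mul_of_abs_le_one (ha : Measurable a) (ha_le : ∀ x, |a x| ≤ 1) {f : α → ℝ}
    (hf : Integrable f μ) : Integrable (fun x => a x * f x) μ :=
  hf.bdd_mul ha.aestronglyMeasurable (c := 1) (.of_forall ha_le)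

theorem integral_mul_sarmanov [SFinite μ] [SFinite ν] (ha : Measurable a) (hb : Measurable b)
    (ha_le : ∀ x, |a x| ≤ 1) (hb_le : ∀ y, |b y| ≤ 1) {f : α → ℝ} {g : β → ℝ}
    (hf : Integrable f μ) (hg : Integrable g ν) :
    ∫ p, f p.1 * g p.2 ∂sarmanov μ ν a b =
      (∫ x, f x ∂μ) * (∫ y, g y ∂ν) + (∫ x, a x * f x ∂μ) * (∫ y, b y * g y ∂ν) := by
  have haf := integrable_mul_of_abs_le_one ha ha_le hf
  have hbg := integrable_mul_of_abs_le_one hb hb_le hg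
  calc ∫ p, f p.1 * g p.2 ∂sarmanov μ ν a b
      = ∫ p, (1 + a p.1 * b p.2) * (f p.1 * g p.2) ∂μ.prod ν := by
        rw [sarmanov, integral_withDensity_eq_integral_toReal_smul (by fun_prop) (by simp)]
        simp only [ENNReal.toReal_ofReal (one_add_mul_nonneg_of_abs_le_one (ha_le _) (hb_le _)),
          smul_eq_mul]
    _ = ∫ p, (f p.1 * g p.2 + a p.1 * f p.1 * (b p.2 * g p.2)) ∂μ.prod ν := by
        congr with p
        ring
    _ = _ := by
        rw [integral_add (hf.mul_prod hg) (haf.mul_prod hbg), integral_prod_mul,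
          integral_prod_mul (fun x => a x * f x) (fun y => b y * g y)]

theorem sarmanov_real_prod [IsFiniteMeasure μ] [IsFiniteMeasure ν] (ha : Measurable a)
    (hb : Measurable b) (ha_le : ∀ x, |a x| ≤ 1) (hb_le : ∀ y, |b y| ≤ 1) {s : Set α} {t : Set β}
    (hs : MeasurableSet s) (ht : MeasurableSet t) :
    (sarmanov μ ν a b).real (s ×ˢ t) =
      μ.real s * ν.real t + (∫ x in s, a x ∂μ) * (∫ y in t, b y ∂ν) := by
  have hind : (s ×ˢ t).indicator (1 : α × β → ℝ) =
      fun p => s.indicator 1 p.1 * t.indicator 1 p.2 :=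
    funext fun _ => indicator_prod_one
  rw [← integral_indicator_one (hs.prod ht), hind,
    integral_mul_sarmanov ha hb ha_le hb_le (f := s.indicator 1) (g := t.indicator 1)
      ((integrable_const 1).indicator hs) ((integrable_const 1).indicator ht),
    integral_indicator_one hs, integral_indicator_one ht]
  simp only [← indicator_mul_right, Pi.one_apply, mul_one, integral_indicator hs,
    integral_indicator ht]

theorem isFiniteMeasure_sarmanov [IsFiniteMeasure μ] [IsFiniteMeasure ν] (ha : Measurable a)
    (hb : Measurable b) (ha_le : ∀ x, |a x| ≤ 1) (hb_le : ∀ y, |b y| ≤ 1) :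
    IsFiniteMeasure (sarmanov μ ν a b) := by
  have ha_int : Integrable a μ := .of_bound ha.aestronglyMeasurable 1 (.of_forall ha_le)
  have hb_int : Integrable b ν := .of_bound hb.aestronglyMeasurable 1 (.of_forall hb_le)
  exact isFiniteMeasure_withDensity_ofReal ((integrable_const 1).add (ha_int.mul_prod hb_int)).2

theorem map_fst_sarmanov [IsFiniteMeasure μ] [IsProbabilityMeasure ν] (ha : Measurable a)
    (hb : Measurable b) (ha_le : ∀ x, |a x| ≤ 1) (hb_le : ∀ y, |b y| ≤ 1)
    (hb_mean : ∫ y, b y ∂ν = 0) :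
    (sarmanov μ ν a b).map Prod.fst = μ := by
  have := isFiniteMeasure_sarmanov (μ := μ) (ν := ν) ha hb ha_le hb_le
  ext s hs
  rw [← measureReal_eq_measureReal_iff, map_measureReal_apply measurable_fst hs, ← prod_univ,
    sarmanov_real_prod ha hb ha_le hb_le hs .univ, setIntegral_univ, hb_mean]
  simp

theorem map_snd_sarmanov [IsProbabilityMeasure μ] [IsFiniteMeasure ν] (ha : Measurable a)
    (hb : Measurable b) (ha_le : ∀ x, |a x| ≤ 1) (hb_le : ∀ y, |b y| ≤ 1)
    (ha_mean : ∫ x, a x ∂μ = 0) :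
    (sarmanov μ ν a b).map Prod.snd = ν := by
  have := isFiniteMeasure_sarmanov (μ := μ) (ν := ν) ha hb ha_le hb_le
  ext t ht
  rw [← measureReal_eq_measureReal_iff, map_measureReal_apply measurable_snd ht, ← univ_prod,
    sarmanov_real_prod ha hb ha_le hb_le .univ ht, setIntegral_univ, ha_mean]
  simp

end Sarmanov

/-! ### Differences of indicator functions -/

section IndicatorSub

variable {α : Type*} {s t : Set α}

/-- The difference of the indicator functions of `s` and `t`: the effect on a density of moving
mass from `t` to `s`. -/
def indicatorSub (s t : Set α) (x : α) : ℝ :=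
  s.indicator 1 x - t.indicator 1 x

theorem abs_indicatorSub_le_one (s t : Set α) (x : α) : |indicatorSub s t x| ≤ 1 := by
  by_cases hs : x ∈ s <;> by_cases ht : x ∈ t <;> simp [indicatorSub, hs, ht]

variable [MeasurableSpace α] {μ : Measure α}

theorem measurable_indicatorSub (hs : MeasurableSet s) (ht : MeasurableSet t) :
    Measurable (indicatorSub s t) :=
  (measurable_one.indicator hs).sub (measurable_one.indicator ht)

theorem integral_indicatorSub_mul (hs : MeasurableSet s) (ht : MeasurableSet t) {f : α → ℝ}
    (hf : Integrable f μ) :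
    ∫ x, indicatorSub s t x * f x ∂μ = (∫ x in s, f x ∂μ) - ∫ x in t, f x ∂μ := by
  have hmul (x : α) : indicatorSub s t x * f x = s.indicator f x - t.indicator f x := by
    by_cases hxs : x ∈ s <;> by_cases hxt : x ∈ t <;> simp [indicatorSub, hxs, hxt]
  simp only [hmul]
  rw [integral_sub (hf.indicator hs) (hf.indicator ht), integral_indicator hs,
    integral_indicator ht]

variable [IsFiniteMeasure μ]

theorem setIntegral_indicatorSub (hs : MeasurableSet s) (ht : MeasurableSet t) (r : Set α) :
    ∫ x in r, indicatorSub s t x ∂μ = μ.real (s ∩ r) - μ.real (t ∩ r) := by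
  simpa [hs, ht] using integral_indicatorSub_mul hs ht (integrable_const (μ := μ.restrict r) 1)

theorem setIntegral_Iic_indicatorSub_nonneg [Preorder α] (hs : MeasurableSet s)
    (ht : MeasurableSet t) (hst : ∀ x ∈ s, ∀ y ∈ t, x ≤ y) (hμ : μ.real s = μ.real t) (z : α) :
    0 ≤ ∫ x in Iic z, indicatorSub s t x ∂μ := by
  rw [setIntegral_indicatorSub hs ht, sub_nonneg]
  rcases (t ∩ Iic z).eq_empty_or_nonempty with hempty | ⟨y, hyt, hyz⟩
  · simp [hempty]
  · have hsz : s ∩ Iic z = s := inter_eq_left.2 fun x hx => (hst x hx y hyt).trans hyz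
    rw [hsz, hμ]
    exact measureReal_mono inter_subset_left

end IndicatorSub

/-! ### One-sided averages of continuous functions -/

section Average

variable {g : ℝ → ℝ} {x y : ℝ}

theorem tendsto_inv_mul_intervalIntegral_right (hg : ContinuousOn g (Icc x y)) (hxy : x < y) :
    Tendsto (fun ε => ε⁻¹ * ∫ t in x..x + ε, g t) (𝓝[>] 0) (𝓝 (g x)) := by
  have hnhds : 𝓝[>] x ≤ 𝓝[Icc x y] x :=
    nhdsWithin_le_iff.2 (Icc_mem_nhdsGT hxy)
  have hmeas : StronglyMeasurableAtFilter g (𝓝[>] x) :=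
    (hg.stronglyMeasurableAtFilter_nhdsWithin measurableSet_Icc x).filter_mono hnhds
  have hcont : ContinuousWithinAt g (Ioi x) x :=
    (hg x (left_mem_Icc.2 hxy.le)).mono_left hnhds
  have hderiv : HasDerivWithinAt (fun z => ∫ t in x..z, g t) (g x) (Ioi x) x :=
    intervalIntegral.integral_hasDerivWithinAt_right .refl hmeas hcont |>.mono Ioi_subset_Ici_self
  have hshift : Tendsto (fun ε => x + ε) (𝓝[>] 0) (𝓝[>] x) := by
    refine tendsto_nhdsWithin_iff.2 ⟨?_, ?_⟩
    · exact ((continuous_const_add x).tendsto' 0 x (add_zero x)).mono_left nhdsWithin_le_nhds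
    · filter_upwards [self_mem_nhdsWithin] with ε hε using lt_add_of_pos_right x hε
  simpa [Function.comp_def, slope_def_field, div_eq_inv_mul] using
    ((hasDerivWithinAt_iff_tendsto_slope' self_notMem_Ioi).1 hderiv).comp hshift

theorem tendsto_inv_mul_intervalIntegral_left (hg : ContinuousOn g (Icc x y)) (hxy : x < y) :
    Tendsto (fun ε => ε⁻¹ * ∫ t in y - ε..y, g t) (𝓝[>] 0) (𝓝 (g y)) := by
  have hneg : ContinuousOn (fun t => g (-t)) (Icc (-y) (-x)) :=
    hg.comp continuousOn_neg fun t ht => ⟨le_neg.1 ht.2, neg_le.1 ht.1⟩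
  simpa [intervalIntegral.integral_comp_neg, sub_eq_add_neg, add_comm] using
    tendsto_inv_mul_intervalIntegral_right hneg (neg_lt_neg hxy)

end Average

/-! ### The uniform distribution -/

section Uniform

variable {g : ℝ → ℝ} {u u' ε : ℝ}

instance isProbabilityMeasure_unif01 : IsProbabilityMeasure unif01 :=
  ⟨by simp [unif01]⟩

theorem memLp_unif01_of_continuousOn (hg : ContinuousOn g (Icc 0 1)) (p : ENNReal) :
    MemLp g p unif01 := by
  obtain ⟨B, hB⟩ := isCompact_Icc.exists_bound_of_continuousOn hg
  refine .of_bound ((hg.mono Ioo_subset_Icc_self).aestronglyMeasurable measurableSet_Ioo) B ?_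
  exact ae_restrict_of_forall_mem measurableSet_Ioo fun x hx => hB x (Ioo_subset_Icc_self hx)

theorem setIntegral_Ioo_unif01 (hu : 0 ≤ u) (huu' : u ≤ u') (hu' : u' ≤ 1) (g : ℝ → ℝ) :
    ∫ x in Ioo u u', g x ∂unif01 = ∫ x in u..u', g x := by
  rw [unif01, Measure.restrict_restrict_of_subset (Ioo_subset_Ioo hu hu'),
    intervalIntegral.integral_of_le huu', integral_Ioc_eq_integral_Ioo]

theorem unif01_real_Ioo (hu : 0 ≤ u) (huu' : u ≤ u') (hu' : u' ≤ 1) :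
    unif01.real (Ioo u u') = u' - u := by
  simpa using setIntegral_Ioo_unif01 hu huu' hu' 1

/-- The perturbation moving mass `ε` of the uniform distribution from the interval of length `ε`
left of `u'` to the interval of length `ε` right of `u`. -/
def massShift (u u' ε : ℝ) : ℝ → ℝ :=
  indicatorSub (Ioo u (u + ε)) (Ioo (u' - ε) u')

theorem measurable_massShift (u u' ε : ℝ) : Measurable (massShift u u' ε) :=
  measurable_indicatorSub measurableSet_Ioo measurableSet_Ioo

theorem abs_massShift_le_one (u u' ε x : ℝ) : |massShift u u' ε x| ≤ 1 :=
  abs_indicatorSub_le_one _ _ x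

theorem integral_massShift_mul (hu : 0 ≤ u) (hu' : u' ≤ 1) (hε : 0 ≤ ε) (hεu : 2 * ε ≤ u' - u)
    (hg : Integrable g unif01) :
    ∫ x, massShift u u' ε x * g x ∂unif01 =
      (∫ x in u..u + ε, g x) - ∫ x in u' - ε..u', g x := by
  rw [massShift, integral_indicatorSub_mul measurableSet_Ioo measurableSet_Ioo hg,
    setIntegral_Ioo_unif01 hu (by linarith) (by linarith),
    setIntegral_Ioo_unif01 (by linarith) (by linarith) hu']

theorem integral_massShift (hu : 0 ≤ u) (hu' : u' ≤ 1) (hε : 0 ≤ ε) (hεu : 2 * ε ≤ u' - u) :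
    ∫ x, massShift u u' ε x ∂unif01 = 0 := by
  simpa using integral_massShift_mul hu hu' hε hεu (integrable_const 1)

theorem setIntegral_Iic_massShift_nonneg (hu : 0 ≤ u) (hu' : u' ≤ 1) (hε : 0 ≤ ε)
    (hεu : 2 * ε ≤ u' - u) (z : ℝ) : 0 ≤ ∫ x in Iic z, massShift u u' ε x ∂unif01 := by
  refine setIntegral_Iic_indicatorSub_nonneg measurableSet_Ioo measurableSet_Ioo ?_ ?_ z
  · intro x hx y hy
    linarith [hx.2, hy.1]
  · rw [unif01_real_Ioo hu (by linarith) (by linarith),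
      unif01_real_Ioo (by linarith) (by linarith) hu']
    ring

theorem eventually_two_mul_le_sub (huu' : u < u') : ∀ᶠ ε in 𝓝[>] (0 : ℝ), 2 * ε ≤ u' - u := by
  filter_upwards [Ioo_mem_nhdsGT (half_pos (sub_pos.2 huu'))] with ε hε
  linarith [hε.2]

theorem tendsto_inv_mul_integral_massShift_mul (hg : ContinuousOn g (Icc 0 1)) (hu : 0 ≤ u)
    (huu' : u < u') (hu' : u' ≤ 1) :
    Tendsto (fun ε => ε⁻¹ * ∫ x, massShift u u' ε x * g x ∂unif01) (𝓝[>] 0)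
      (𝓝 (g u - g u')) := by
  have hg_int : Integrable g unif01 := (memLp_unif01_of_continuousOn hg 1).integrable le_rfl
  have hg_sub : ContinuousOn g (Icc u u') := hg.mono (Icc_subset_Icc hu hu')
  refine ((tendsto_inv_mul_intervalIntegral_right hg_sub huu').sub
    (tendsto_inv_mul_intervalIntegral_left hg_sub huu')).congr' ?_
  filter_upwards [self_mem_nhdsWithin, eventually_two_mul_le_sub huu'] with ε hε hεu
  rw [integral_massShift_mul hu hu' (le_of_lt hε) hεu hg_int, mul_sub]

end Uniform

/-! ### Copulas -/

section Copula

variable {C : Measure (ℝ × ℝ)} {a b g g1 g2 : ℝ → ℝ}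

/-- Positive quadrant dependence (Lehmann): the copula dominates the independence copula in the
concordance order. -/
def IsPositivelyQuadrantDependent (C : Measure (ℝ × ℝ)) : Prop :=
  ∀ u v, cdf2 indepCopula u v ≤ cdf2 C u v

theorem isCopula_of_marginals (hfst : C.map Prod.fst = unif01) (hsnd : C.map Prod.snd = unif01) :
    IsCopula C where
  prob := (Measure.isProbabilityMeasure_map_iff measurable_fst.aemeasurable).1
    (hfst ▸ isProbabilityMeasure_unif01)
  fst_marginal := hfst
  snd_marginal := hsnd

theorem isCopula_indepCopula : IsCopula indepCopula :=
  isCopula_of_marginals measurePreserving_fst.map_eq measurePreserving_snd.map_eq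

theorem isCopula_comonCopula : IsCopula comonCopula := by
  have hdiag : Measurable fun u : ℝ => (u, u) := by fun_prop
  apply isCopula_of_marginals
  · exact (Measure.map_map measurable_fst hdiag).trans Measure.map_id
  · exact (Measure.map_map measurable_snd hdiag).trans Measure.map_id

theorem isCopula_sarmanov (ha : Measurable a) (hb : Measurable b) (ha_le : ∀ x, |a x| ≤ 1)
    (hb_le : ∀ y, |b y| ≤ 1) (ha_mean : ∫ x, a x ∂unif01 = 0) (hb_mean : ∫ y, b y ∂unif01 = 0) :
    IsCopula (sarmanov unif01 unif01 a b) :=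
  isCopula_of_marginals (map_fst_sarmanov ha hb ha_le hb_le hb_mean)
    (map_snd_sarmanov ha hb ha_le hb_le ha_mean)

theorem isPositivelyQuadrantDependent_sarmanov (ha : Measurable a) (hb : Measurable b)
    (ha_le : ∀ x, |a x| ≤ 1) (hb_le : ∀ y, |b y| ≤ 1)
    (ha_nonneg : ∀ z, 0 ≤ ∫ x in Iic z, a x ∂unif01)
    (hb_nonneg : ∀ z, 0 ≤ ∫ y in Iic z, b y ∂unif01) :
    IsPositivelyQuadrantDependent (sarmanov unif01 unif01 a b) := by
  intro u v
  change (unif01.prod unif01).real _ ≤ (sarmanov unif01 unif01 a b).real _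
  rw [measureReal_prod_prod,
    sarmanov_real_prod ha hb ha_le hb_le measurableSet_Iic measurableSet_Iic]
  exact le_add_of_nonneg_right (mul_nonneg (ha_nonneg u) (hb_nonneg v))

namespace IsCopula

theorem measurePreserving_fst (hC : IsCopula C) : MeasurePreserving Prod.fst C unif01 :=
  ⟨measurable_fst, hC.fst_marginal⟩

theorem measurePreserving_snd (hC : IsCopula C) : MeasurePreserving Prod.snd C unif01 :=
  ⟨measurable_snd, hC.snd_marginal⟩

theorem memLp_fst (hC : IsCopula C) {p : ENNReal} (hg : MemLp g p unif01) :
    MemLp (fun q : ℝ × ℝ => g q.1) p C :=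
  hg.comp_measurePreserving hC.measurePreserving_fst

theorem memLp_snd (hC : IsCopula C) {p : ENNReal} (hg : MemLp g p unif01) :
    MemLp (fun q : ℝ × ℝ => g q.2) p C :=
  hg.comp_measurePreserving hC.measurePreserving_snd

theorem covariance_eq_sub (hC : IsCopula C) (hg1 : MemLp g1 2 unif01) (hg2 : MemLp g2 2 unif01) :
    cov[fun p => g1 p.1, fun p => g2 p.2; C] =
      ∫ p, g1 p.1 * g2 p.2 ∂C - (∫ x, g1 x ∂unif01) * ∫ y, g2 y ∂unif01 := by
  have := hC.prob
  rw [ProbabilityTheory.covariance_eq_sub (hC.memLp_fst hg1) (hC.memLp_snd hg2),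
    ← hC.measurePreserving_fst.hasLaw.integral_comp hg1.1,
    ← hC.measurePreserving_snd.hasLaw.integral_comp hg2.1]
  rfl

theorem pearson_eq_covariance_div (hC : IsCopula C) (hg1 : MemLp g1 2 unif01)
    (hg2 : MemLp g2 2 unif01) :
    pearson C (fun p => g1 p.1) (fun p => g2 p.2) =
      cov[fun p => g1 p.1, fun p => g2 p.2; C] / √(Var[g1; unif01] * Var[g2; unif01]) := by
  have := hC.prob
  rw [pearson, ProbabilityTheory.covariance_eq_sub (hC.memLp_fst hg1) (hC.memLp_snd hg2),
    hC.measurePreserving_fst.variance_fun_comp hg1.1.aemeasurable,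
    hC.measurePreserving_snd.variance_fun_comp hg2.1.aemeasurable]
  rfl

end IsCopula

theorem covariance_sarmanov (ha : Measurable a) (hb : Measurable b) (ha_le : ∀ x, |a x| ≤ 1)
    (hb_le : ∀ y, |b y| ≤ 1) (ha_mean : ∫ x, a x ∂unif01 = 0) (hb_mean : ∫ y, b y ∂unif01 = 0)
    (hg1 : MemLp g1 2 unif01) (hg2 : MemLp g2 2 unif01) :
    cov[fun p => g1 p.1, fun p => g2 p.2; sarmanov unif01 unif01 a b] =
      (∫ x, a x * g1 x ∂unif01) * ∫ y, b y * g2 y ∂unif01 := by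
  rw [(isCopula_sarmanov ha hb ha_le hb_le ha_mean hb_mean).covariance_eq_sub hg1 hg2,
    integral_mul_sarmanov ha hb ha_le hb_le (hg1.integrable one_le_two)
      (hg2.integrable one_le_two), add_sub_cancel_left]

theorem IsConcordanceMeasure.covariance_nonneg
    (hκ : IsConcordanceMeasure fun C => pearson C (fun p => g1 p.1) (fun p => g2 p.2))
    (hg1 : MemLp g1 2 unif01) (hg2 : MemLp g2 2 unif01) (hC : IsCopula C)
    (hpqd : IsPositivelyQuadrantDependent C) :
    0 ≤ cov[fun p => g1 p.1, fun p => g2 p.2; C] := by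
  -- `pearson` is `0` (division by zero) when a variance vanishes, so the value `1` at the
  -- comonotone copula forces both variances to be positive.
  have hcomon := hκ.comonotone_val
  rw [isCopula_comonCopula.pearson_eq_covariance_div hg1 hg2] at hcomon
  have hsqrt : 0 < √(Var[g1; unif01] * Var[g2; unif01]) := by
    refine (Real.sqrt_nonneg _).lt_of_ne' fun hzero => ?_
    simp [hzero] at hcomon
  have hpearson := hκ.coherence _ _ isCopula_indepCopula hC hpqd
  rw [hκ.independence, hC.pearson_eq_covariance_div hg1 hg2] at hpearson
  exact div_mul_cancel₀ (cov[_, _; C]) hsqrt.ne' ▸ mul_nonneg hpearson hsqrt.le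

end Copula

theorem integral_massShift_mul_mul_nonneg {g1 g2 : ℝ → ℝ} (hg1 : MemLp g1 2 unif01)
    (hg2 : MemLp g2 2 unif01)
    (hcov : ∀ C, IsCopula C → IsPositivelyQuadrantDependent C →
      0 ≤ cov[fun p => g1 p.1, fun p => g2 p.2; C])
    {u u' v v' ε : ℝ} (hu : 0 ≤ u) (hu' : u' ≤ 1) (hv : 0 ≤ v) (hv' : v' ≤ 1) (hε : 0 ≤ ε)
    (hεu : 2 * ε ≤ u' - u) (hεv : 2 * ε ≤ v' - v) :
    0 ≤ (∫ x, massShift u u' ε x * g1 x ∂unif01) * ∫ y, massShift v v' ε y * g2 y ∂unif01 := by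
  have ha := measurable_massShift u u' ε
  have hb := measurable_massShift v v' ε
  have ha_le := abs_massShift_le_one u u' ε
  have hb_le := abs_massShift_le_one v v' ε
  have ha_mean := integral_massShift hu hu' hε hεu
  have hb_mean := integral_massShift hv hv' hε hεv
  rw [← covariance_sarmanov ha hb ha_le hb_le ha_mean hb_mean hg1 hg2]
  exact hcov _ (isCopula_sarmanov ha hb ha_le hb_le ha_mean hb_mean)
    (isPositivelyQuadrantDependent_sarmanov ha hb ha_le hb_le
      (setIntegral_Iic_massShift_nonneg hu hu' hε hεu)
      (setIntegral_Iic_massShift_nonneg hv hv' hε hεv))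

theorem monotonicity_of_g_general {g1 g2 : ℝ → ℝ} (h1 : ContinuousOn g1 (Icc 0 1))
    (h2 : ContinuousOn g2 (Icc 0 1))
    (hcov : ∀ C, IsCopula C → IsPositivelyQuadrantDependent C →
      0 ≤ cov[fun p => g1 p.1, fun p => g2 p.2; C])
    (u u' v v' : ℝ) (hu : 0 ≤ u) (huu' : u < u') (hu' : u' ≤ 1) (hv : 0 ≤ v) (hvv' : v < v')
    (hv' : v' ≤ 1) :
    0 ≤ (g1 u' - g1 u) * (g2 v' - g2 v) := by
  have hlim := (tendsto_inv_mul_integral_massShift_mul h1 hu huu' hu').mul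
    (tendsto_inv_mul_integral_massShift_mul h2 hv hvv' hv')
  rw [← neg_mul_neg, neg_sub, neg_sub]
  refine ge_of_tendsto hlim ?_
  filter_upwards [self_mem_nhdsWithin, eventually_two_mul_le_sub huu',
    eventually_two_mul_le_sub hvv'] with ε hε hεu hεv
  rw [mul_mul_mul_comm]
  exact mul_nonneg (mul_self_nonneg _) <| integral_massShift_mul_mul_nonneg
    (memLp_unif01_of_continuousOn h1 2) (memLp_unif01_of_continuousOn h2 2) hcov hu hu' hv hv'
    (le_of_lt hε) hεu hεv

/-- If the transformed correlation `κ_{g1,g2}`, built from continuous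
functions `g1, g2 : [0,1] → ℝ` via
`κ_{g1,g2}(C) = ρ(g1(U1), g2(U2))` for `(U1,U2) ~ C`, is a measure of concordance
in the sense of Scarsini, then `g1` and `g2` are both increasing or both decreasing. -/
theorem monotonicity_of_g (g1 g2 : ℝ → ℝ)
    (h1 : ContinuousOn g1 (Set.Icc 0 1)) (h2 : ContinuousOn g2 (Set.Icc 0 1))
    (hκ : IsConcordanceMeasure
      (fun C => pearson C (fun p => g1 p.1) (fun p => g2 p.2))) :
    ∀ u u' v v' : ℝ, 0 ≤ u → u < u' → u' ≤ 1 → 0 ≤ v → v < v' → v' ≤ 1 →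
      0 ≤ (g1 u' - g1 u) * (g2 v' - g2 v) := by
  exact monotonicity_of_g_general h1 h2 fun _ => hκ.covariance_nonneg
    (memLp_unif01_of_continuousOn h1 2) (memLp_unif01_of_continuousOn h2 2)
end
end

section
/- For any concordance-inducing distribution function G and any dimension d, the set K_G of all d×d matrices of pairwise G-transformed rank correlation coefficients (equivalently, the set of Pearson correlation matrices of d-dimensional random vectors all of whose margins have distribution G) is a convex subset of the space of d×d real matrices. -/
open MeasureTheory ProbabilityTheory Set

noncomputable section

/-- A distribution on ℝ is symmetric (about some point `m`). -/
def SymmetricDist (G : Measure ℝ) : Prop :=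
  ∃ m : ℝ, G.map (fun x => 2 * m - x) = G

/-- A distribution on ℝ is non-degenerate: it is not a point mass. -/
def Nondegenerate (G : Measure ℝ) : Prop := ∀ c : ℝ, G ≠ Measure.dirac c

/-- A distribution is concordance inducing: non-degenerate, symmetric,
with finite second moment. -/
def ConcordanceInducing (G : Measure ℝ) : Prop :=
  Nondegenerate G ∧ SymmetricDist G ∧ Integrable (fun x : ℝ => x ^ 2) G

/-- `corrSet ν d` is the set of `d×d` Pearson correlation matrices of random vectors
all of whose margins have distribution `ν`. -/
def corrSet (ν : Measure ℝ) (d : ℕ) : Set (Matrix (Fin d) (Fin d) ℝ) :=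
  {P | ∃ μ : Measure (Fin d → ℝ), IsProbabilityMeasure μ ∧
        (∀ j, μ.map (fun x => x j) = ν) ∧
        (∀ i j, P i j = pearson μ (fun x => x i) (fun x => x j))}

/-- The Bernoulli distribution `Bern(p)` on ℝ. -/
def bern (p : ℝ) : Measure ℝ :=
  ENNReal.ofReal p • Measure.dirac (1:ℝ) + ENNReal.ofReal (1 - p) • Measure.dirac (0:ℝ)

/-- The set of `d×d` correlation matrices of random vectors with `Bern(1/2)` margins. -/
def PBd (d : ℕ) : Set (Matrix (Fin d) (Fin d) ℝ) := corrSet (bern (1/2)) d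

/-- The set of all `d×d` correlation matrices: symmetric positive semi-definite
matrices with entries in `[-1,1]` and unit diagonal. -/
def Pd (d : ℕ) : Set (Matrix (Fin d) (Fin d) ℝ) :=
  {P | P.IsSymm ∧ (∀ i j, P i j ∈ Set.Icc (-1:ℝ) 1) ∧ P.PosSemidef ∧ ∀ i, P i i = 1}

/- For fixed margins, the means and variances of the coordinates do not depend on the joint law, so
each correlation coefficient is an affine function of the joint law through `∫ xᵢ xⱼ`. Joint laws
with prescribed margins are closed under mixtures, so their correlation matrices form a convex
set. -/

open scoped NNReal ENNReal

section Mixture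

variable {Ω : Type*} [MeasurableSpace Ω] {μ ν : Measure Ω} {X Y : Ω → ℝ} {F G : Measure ℝ}
  {a b : ℝ≥0}

lemma hasLaw_iff_map_eq {S : Type*} [MeasurableSpace S] {Z : Ω → S} {H : Measure S}
    (hZ : Measurable Z) : HasLaw Z H μ ↔ μ.map Z = H :=
  ⟨HasLaw.map_eq, fun h ↦ ⟨hZ.aemeasurable, h⟩⟩

lemma hasLaw_smul_add_smul {S : Type*} [MeasurableSpace S] {Z : Ω → S} {H : Measure S}
    (hμ : HasLaw Z H μ) (hν : HasLaw Z H ν) (hab : a + b = 1) :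
    HasLaw Z H (a • μ + b • ν) where
  aemeasurable := (hμ.aemeasurable.smul_measure a).add_measure (hν.aemeasurable.smul_measure b)
  map_eq := by
    rw [AEMeasurable.map_add₀ (hμ.aemeasurable.smul_measure a) (hν.aemeasurable.smul_measure b),
      Measure.map_smul, Measure.map_smul, hμ.map_eq, hν.map_eq, ← add_smul, hab, one_smul]

lemma integral_smul_add_smul_measure {E : Type*} [NormedAddCommGroup E] [NormedSpace ℝ E]
    {f : Ω → E} (hμ : Integrable f μ) (hν : Integrable f ν) :
    ∫ ω, f ω ∂(a • μ + b • ν) = a • ∫ ω, f ω ∂μ + b • ∫ ω, f ω ∂ν := by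
  rw [integral_add_measure hμ.smul_measure_nnreal hν.smul_measure_nnreal,
    integral_smul_nnreal_measure, integral_smul_nnreal_measure]

lemma memLp_of_hasLaw {E : Type*} [NormedAddCommGroup E] [MeasurableSpace E] {Z : Ω → E}
    {H : Measure E} {p : ℝ≥0∞} (hZ : HasLaw Z H μ) (hH : MemLp id p H) : MemLp Z p μ := by
  rw [← hZ.map_eq] at hH
  exact hH.comp_of_map hZ.aemeasurable

lemma integrable_mul_of_hasLaw (hX : HasLaw X F μ) (hY : HasLaw Y G μ)
    (hF : MemLp id 2 F) (hG : MemLp id 2 G) : Integrable (fun ω ↦ X ω * Y ω) μ :=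
  (memLp_of_hasLaw hX hF).integrable_mul (memLp_of_hasLaw hY hG)

lemma pearson_eq_of_hasLaw (hX : HasLaw X F μ) (hY : HasLaw Y G μ) :
    pearson μ X Y =
      ((∫ ω, X ω * Y ω ∂μ) - (∫ x, x ∂F) * ∫ y, y ∂G) / √(Var[id; F] * Var[id; G]) := by
  rw [pearson, hX.integral_eq, hY.integral_eq, hX.variance_eq, hY.variance_eq]

lemma pearson_smul_add_smul_measure (hXμ : HasLaw X F μ) (hXν : HasLaw X F ν)
    (hYμ : HasLaw Y G μ) (hYν : HasLaw Y G ν) (hF : MemLp id 2 F) (hG : MemLp id 2 G)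
    (hab : a + b = 1) :
    pearson (a • μ + b • ν) X Y = a * pearson μ X Y + b * pearson ν X Y := by
  have hab_real : (a : ℝ) + b = 1 := mod_cast hab
  rw [pearson_eq_of_hasLaw (hasLaw_smul_add_smul hXμ hXν hab) (hasLaw_smul_add_smul hYμ hYν hab),
    pearson_eq_of_hasLaw hXμ hYμ, pearson_eq_of_hasLaw hXν hYν,
    integral_smul_add_smul_measure (integrable_mul_of_hasLaw hXμ hYμ hF hG)
      (integrable_mul_of_hasLaw hXν hYν hF hG), NNReal.smul_def, NNReal.smul_def,
    smul_eq_mul, smul_eq_mul, eq_sub_of_add_eq hab_real]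
  ring

end Mixture

section FrechetClass

variable {ι : Type*}

/-- The Fréchet class of the margins `G`: the joint laws on `ι → ℝ` whose `j`-th margin is `G j`.
The total mass is prescribed separately because an empty family of margins does not fix it. -/
def frechetClass (G : ι → Measure ℝ) : Set (Measure (ι → ℝ)) :=
  {μ | IsProbabilityMeasure μ ∧ ∀ j, HasLaw (fun x ↦ x j) (G j) μ}

/-- The matrix of pairwise Pearson correlation coefficients of the coordinates under the joint
law `μ`. -/
def corrMatrix (μ : Measure (ι → ℝ)) : Matrix ι ι ℝ :=
  Matrix.of fun i j ↦ pearson μ (fun x ↦ x i) (fun x ↦ x j)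

lemma corrSet_eq_image_frechetClass (G : Measure ℝ) (d : ℕ) :
    corrSet G d = corrMatrix '' frechetClass fun _ : Fin d ↦ G := by
  ext P
  simp only [corrSet, frechetClass, corrMatrix, hasLaw_iff_map_eq (measurable_pi_apply _),
    mem_image, mem_ofPred_eq, and_assoc, ← Matrix.ext_iff, Matrix.of_apply, eq_comm]

lemma convex_frechetClass (G : ι → Measure ℝ) : Convex ℝ≥0 (frechetClass G) := by
  rintro μ ⟨_, hμ⟩ ν ⟨_, hν⟩ a b - - hab
  have total_mass : (a • μ + b • ν) univ = 1 := by
    rw [Measure.add_apply, Measure.smul_apply, Measure.smul_apply, measure_univ, measure_univ,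
      ← add_smul, hab, one_smul]
  exact ⟨⟨total_mass⟩, fun j ↦ hasLaw_smul_add_smul (hμ j) (hν j) hab⟩

lemma corrMatrix_smul_add_smul {G : ι → Measure ℝ} (hG : ∀ j, MemLp id 2 (G j))
    {μ ν : Measure (ι → ℝ)} (hμ : μ ∈ frechetClass G) (hν : ν ∈ frechetClass G) {a b : ℝ≥0}
    (hab : a + b = 1) :
    corrMatrix (a • μ + b • ν) = (a : ℝ) • corrMatrix μ + (b : ℝ) • corrMatrix ν := by
  ext i j
  exact pearson_smul_add_smul_measure (hμ.2 i) (hν.2 i) (hμ.2 j) (hν.2 j) (hG i) (hG j) hab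

theorem corrSet_convex_general (G : ι → Measure ℝ) [∀ j, IsProbabilityMeasure (G j)]
    (_hG : ∀ j, Nondegenerate (G j)) (hG_sq : ∀ j, MemLp id 2 (G j)) :
    Convex ℝ (corrMatrix '' frechetClass G) := by
  rintro _ ⟨μ, hμ, rfl⟩ _ ⟨ν, hν, rfl⟩ a b ha hb hab
  lift a to ℝ≥0 using ha
  lift b to ℝ≥0 using hb
  replace hab : a + b = 1 := mod_cast hab
  exact ⟨a • μ + b • ν, convex_frechetClass G hμ hν zero_le zero_le hab,
    corrMatrix_smul_add_smul hG_sq hμ hν hab⟩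

end FrechetClass

/-- for any concordance-inducing distribution `G` and any dimension `d`,
the set `K_G` of `d×d` matrices of pairwise G-transformed rank correlation coefficients
(the correlation matrices of random vectors with all margins `G`) is convex. -/
theorem corrSet_convex (G : Measure ℝ) [IsProbabilityMeasure G]
    (hG : ConcordanceInducing G) (d : ℕ) :
    Convex ℝ (corrSet G d) := by
  rw [corrSet_eq_image_frechetClass]
  exact corrSet_convex_general _ (fun _ ↦ hG.1) fun _ ↦
    (memLp_two_iff_integrable_sq aestronglyMeasurable_id).2 hG.2.2
end
end
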